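/- arXiv:2305.08463 — 2 statements merged into one kernel-verified Lean document; each statement's English description precedes it below -/
import Mathlib

section
/- (Convergence guarantee for MS.) Assume Assumptions RS and QM, and let (y_t)_{t∈ℕ} be the mode estimate sequence obtained by the MS iteration starting from y₁ with f(y₁) > 0. Assume further that for some τ ∈ ℕ, with S := closure of the convex hull of {y_t : t ≥ τ}: (a1) the KDE f is differentiable on S and its gradient is Lipschitz continuous on S, and (a2) f has the Łojasiewicz property on S, i.e. there exist ε > 0, c > 0 and θ ∈ [0,1) such that for all x', x ∈ S with ‖x' − x‖ < ε and f(x') − f(x) ≥ 0 one has ‖∇f(x)‖ ≥ c·(f(x') − f(x))^θ. Then the trajectory has finite length, Σ_{t=1}^∞ ‖y_{t+1} − y_t‖ < ∞, and (y_t)_{t∈ℕ} converges to a point ȳ with ∇f(ȳ) = 0 (a critical point of f). -/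
open Set Filter Topology MeasureTheory
open scoped BigOperators RealInnerProductSpace

noncomputable section

/-- Euclidean space `ℝ^d`. -/
abbrev Euc (d : ℕ) := EuclideanSpace ℝ (Fin d)

/-- The convex subdifferential of a function `g` (viewed as a function on `[0,∞)`) at `u`. -/
def subdiffIci (g : ℝ → ℝ) (u : ℝ) : Set ℝ :=
  {c : ℝ | ∀ v ∈ Set.Ici (0:ℝ), g v - g u ≥ c * (v - u)}

/-- Assumption RS: the kernel `K` is bounded, continuous, non-negative, normalized, and
radially symmetric with profile `Khat`. -/
structure AssumptionRS (d : ℕ) (K : Euc d → ℝ) (Khat : ℝ → ℝ) : Prop where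
  bounded : ∃ M : ℝ, ∀ x, K x ≤ M
  cont : Continuous K
  nonneg : ∀ x, 0 ≤ K x
  normalized : ∫ x, K x = 1
  radial : ∀ x, K x = Khat (‖x‖ ^ 2 / 2)

/-- Assumption QM for the profile `Khat`, together with the selection `Kcheck`:
`Khat` is convex and non-increasing on `[0,∞)`, its right derivative at `0` exists as a real
number and equals `-(Kcheck 0)` (i.e. `Kcheck 0 = -Khat'(0+) > -∞`), and for every `u > 0`,
`-(Kcheck u)` belongs to the subdifferential of `Khat` at `u`. -/
structure AssumptionQM (Khat Kcheck : ℝ → ℝ) : Prop where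
  convexOn : ConvexOn ℝ (Set.Ici (0:ℝ)) Khat
  antitoneOn : AntitoneOn Khat (Set.Ici (0:ℝ))
  rderiv0 : Filter.Tendsto (fun v => (Khat v - Khat 0) / v)
      (nhdsWithin 0 (Set.Ioi 0)) (nhds (-(Kcheck 0)))
  subdiff : ∀ u : ℝ, 0 < u → -(Kcheck u) ∈ subdiffIci Khat u

/-- The kernel density estimate `f(y) = (1/(n hᵈ)) ∑ᵢ K((y - xᵢ)/h)`. -/
def KDE (d n : ℕ) (K : Euc d → ℝ) (x : Fin n → Euc d) (h : ℝ) (y : Euc d) : ℝ :=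
  (1 / ((n : ℝ) * h ^ d)) * ∑ i : Fin n, K (h⁻¹ • (y - x i))

/-- `f̌(y) = (1/(n hᵈ)) ∑ᵢ Ǩ(‖(y - xᵢ)/h‖²/2)`. -/
def fcheck (d n : ℕ) (Kcheck : ℝ → ℝ) (x : Fin n → Euc d) (h : ℝ) (y : Euc d) : ℝ :=
  (1 / ((n : ℝ) * h ^ d)) * ∑ i : Fin n, Kcheck (‖h⁻¹ • (y - x i)‖ ^ 2 / 2)

/-- The mean shift vector `m(y)`: zero if `f̌(y) = 0`, and otherwise
`m(y) = ∑ᵢ Ǩ(‖(y - xᵢ)/h‖²/2)(xᵢ - y) / ∑ᵢ Ǩ(‖(y - xᵢ)/h‖²/2)`. -/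
def msMap (d n : ℕ) (Kcheck : ℝ → ℝ) (x : Fin n → Euc d) (h : ℝ) (y : Euc d) : Euc d :=
  if fcheck d n Kcheck x h y = 0 then 0
  else (∑ i : Fin n, Kcheck (‖h⁻¹ • (y - x i)‖ ^ 2 / 2))⁻¹ •
    ∑ i : Fin n, Kcheck (‖h⁻¹ • (y - x i)‖ ^ 2 / 2) • (x i - y)

/-- `y` is a mean shift iteration sequence: `y (t+1) = y t + m (y t)` for all `t`. -/
def MSSeq (d n : ℕ) (Kcheck : ℝ → ℝ) (x : Fin n → Euc d) (h : ℝ) (y : ℕ → Euc d) : Prop :=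
  ∀ t : ℕ, y (t + 1) = y t + msMap d n Kcheck x h (y t)

/-- `f` has the Łojasiewicz property on the set `S`. -/
def LojasiewiczOn (d : ℕ) (f : Euc d → ℝ) (S : Set (Euc d)) : Prop :=
  ∃ ε > (0:ℝ), ∃ c > (0:ℝ), ∃ θ ∈ Set.Ico (0:ℝ) 1,
    ∀ x' ∈ S, ∀ x ∈ S, ‖x' - x‖ < ε → 0 ≤ f x' - f x →
      ‖gradient f x‖ ≥ c * (f x' - f x) ^ θ

/-- `f` satisfies the Łojasiewicz inequality at `ybar` with exponent `θ`, on the set `S`. -/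
def LojasiewiczAtWith (d : ℕ) (f : Euc d → ℝ) (S : Set (Euc d)) (ybar : Euc d) (θ : ℝ) : Prop :=
  ∃ ε > (0:ℝ), ∃ c > (0:ℝ),
    ∀ y ∈ S, ‖ybar - y‖ < ε → 0 ≤ f ybar - f y →
      ‖gradient f y‖ ≥ c * (f ybar - f y) ^ θ

lemma Kcheck_sub {Khat Kcheck : ℝ → ℝ} (hQM : AssumptionQM Khat Kcheck) (u v : ℝ)
    (hu : 0 ≤ u) (hv : 0 ≤ v) : Khat u - Kcheck u * (v - u) ≤ Khat v := by
  rcases hu.eq_or_lt with rfl | hu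
  · rcases hv.eq_or_lt with rfl | hv
    · simp
    · have key : -(Kcheck 0) ≤ (Khat v - Khat 0) / v := by
        refine le_of_tendsto hQM.rderiv0 ?_
        have : Set.Ioo (0:ℝ) v ∈ nhdsWithin (0:ℝ) (Set.Ioi 0) := Ioo_mem_nhdsGT hv
        filter_upwards [this] with w hw
        have := hQM.convexOn.secant_mono (a := 0) (x := w) (y := v) (by simp) (by simpa using hw.1.le)
          (by simpa using hv.le) hw.1.ne' hv.ne' hw.2.le
        simpa using this
      rw [le_div_iff₀ hv] at key
      linarith
  · have := hQM.subdiff u hu v hv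
    linarith

lemma Kcheck_nonneg {Khat Kcheck : ℝ → ℝ} (hQM : AssumptionQM Khat Kcheck) (u : ℝ)
    (hu : 0 ≤ u) : 0 ≤ Kcheck u := by
  have h1 := Kcheck_sub hQM u (u + 1) hu (by linarith)
  have h2 := hQM.antitoneOn (a := u) (b := u + 1) hu (by simp; linarith) (by linarith)
  linarith

lemma Kcheck_le {Khat Kcheck : ℝ → ℝ} (hQM : AssumptionQM Khat Kcheck) (u : ℝ)
    (hu : 0 ≤ u) : Kcheck u ≤ Kcheck 0 := by
  rcases hu.eq_or_lt with rfl | hu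
  · rfl
  have h1 := Kcheck_sub hQM u 0 hu.le le_rfl
  have h2 := Kcheck_sub hQM 0 u le_rfl hu.le
  by_contra! hc
  nlinarith

/-- The profile gets below any positive level. -/
lemma exists_small {d : ℕ} (hd : 0 < d) {K : Euc d → ℝ} {Khat : ℝ → ℝ}
    (hRS : AssumptionRS d K Khat) (a : ℝ) (ha : 0 < a) : ∃ v : ℝ, 0 ≤ v ∧ Khat v ≤ a := by
  by_contra! hc
  have hK : ∀ x, a ≤ K x := fun x => by
    rw [hRS.radial]; exact (hc _ (by positivity)).le
  have hint : Integrable K := by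
    by_contra hni
    have := hRS.normalized
    rw [integral_undef hni] at this
    exact zero_ne_one this
  have hca : Integrable (fun _ : Euc d => a) :=
    hint.mono' aestronglyMeasurable_const
      (Eventually.of_forall fun x => by rw [Real.norm_of_nonneg ha.le]; exact hK x)
  have : Nonempty (Fin d) := ⟨⟨0, hd⟩⟩
  have : Nontrivial (Euc d) := by infer_instance
  rw [integrable_const_iff] at hca
  rcases hca with h0 | h0
  · exact ha.ne' h0
  · have h1 := h0.measure_univ_lt_top
    have h2 : (volume : Measure (Euc d)) Set.univ = ⊤ :=
      measure_univ_of_isAddLeftInvariant _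
    rw [h2] at h1
    exact lt_irrefl _ h1

lemma fcheck_nonneg {d n : ℕ} {Khat Kcheck : ℝ → ℝ} (hQM : AssumptionQM Khat Kcheck)
    (x : Fin n → Euc d) {h : ℝ} (hh : 0 < h) (y : Euc d) : 0 ≤ fcheck d n Kcheck x h y := by
  unfold fcheck
  refine mul_nonneg (by positivity) (Finset.sum_nonneg fun i _ => ?_)
  exact Kcheck_nonneg hQM _ (by positivity)

lemma fcheck_le {d n : ℕ} {Khat Kcheck : ℝ → ℝ} (hQM : AssumptionQM Khat Kcheck)
    (x : Fin n → Euc d) {h : ℝ} (hh : 0 < h) (y : Euc d) :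
    fcheck d n Kcheck x h y ≤ (1 / ((n : ℝ) * h ^ d)) * (n * Kcheck 0) := by
  unfold fcheck
  refine mul_le_mul_of_nonneg_left ?_ (by positivity)
  calc _ ≤ ∑ i : Fin n, Kcheck 0 := Finset.sum_le_sum fun i _ => Kcheck_le hQM _ (by positivity)
    _ = _ := by simp

lemma fcheck_smul_msMap {d n : ℕ} (hn : 0 < n) {Khat Kcheck : ℝ → ℝ}
    (hQM : AssumptionQM Khat Kcheck) (x : Fin n → Euc d) {h : ℝ} (hh : 0 < h) (y : Euc d) :
    fcheck d n Kcheck x h y • msMap d n Kcheck x h y = (1 / ((n : ℝ) * h ^ d)) •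
      ∑ i : Fin n, Kcheck (‖h⁻¹ • (y - x i)‖ ^ 2 / 2) • (x i - y) := by
  have hC : (1 / ((n : ℝ) * h ^ d)) ≠ 0 := by positivity
  unfold msMap
  split_ifs with h0
  · have h1 : ∑ i : Fin n, Kcheck (‖h⁻¹ • (y - x i)‖ ^ 2 / 2) = 0 := by
      unfold fcheck at h0
      exact (mul_eq_zero.1 h0).resolve_left hC
    rw [Finset.sum_eq_zero_iff_of_nonneg
      (fun i _ => Kcheck_nonneg hQM _ (by positivity))] at h1
    rw [Finset.sum_eq_zero (fun i hi => by rw [h1 i hi, zero_smul])]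
    simp
  · have h1 : ∑ i : Fin n, Kcheck (‖h⁻¹ • (y - x i)‖ ^ 2 / 2) ≠ 0 := by
      intro h2
      exact h0 (by unfold fcheck; rw [h2, mul_zero])
    rw [smul_smul]
    congr 1
    unfold fcheck
    rw [mul_assoc, mul_inv_cancel₀ h1, mul_one]

/-- Quadratic minorizer. -/
lemma minorizer {d n : ℕ} (hn : 0 < n) {K : Euc d → ℝ} {Khat Kcheck : ℝ → ℝ}
    (hRS : AssumptionRS d K Khat) (hQM : AssumptionQM Khat Kcheck)
    (x : Fin n → Euc d) {h : ℝ} (hh : 0 < h) (y v : Euc d) :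
    KDE d n K x h y + (h ^ 2)⁻¹ * inner ℝ (fcheck d n Kcheck x h y • msMap d n Kcheck x h y) v
      - (h ^ 2)⁻¹ * fcheck d n Kcheck x h y / 2 * ‖v‖ ^ 2 ≤ KDE d n K x h (y + v) := by
  rw [fcheck_smul_msMap hn hQM x hh]
  have hC : 0 ≤ (1 / ((n : ℝ) * h ^ d)) := by positivity
  unfold KDE fcheck
  rw [real_inner_smul_left, sum_inner]
  set C := (1 / ((n : ℝ) * h ^ d))
  have hterm : ∀ i : Fin n, K (h⁻¹ • (y - x i)) +
      (h ^ 2)⁻¹ * inner ℝ (Kcheck (‖h⁻¹ • (y - x i)‖ ^ 2 / 2) • (x i - y)) v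
      - (h ^ 2)⁻¹ * Kcheck (‖h⁻¹ • (y - x i)‖ ^ 2 / 2) / 2 * ‖v‖ ^ 2
      ≤ K (h⁻¹ • (y + v - x i)) := by
    intro i
    rw [hRS.radial, hRS.radial]
    have := Kcheck_sub hQM (‖h⁻¹ • (y - x i)‖ ^ 2 / 2) (‖h⁻¹ • (y + v - x i)‖ ^ 2 / 2)
      (by positivity) (by positivity)
    refine le_trans (le_of_eq ?_) this
    have e : ‖h⁻¹ • (y + v - x i)‖ ^ 2 =
        ‖h⁻¹ • (y - x i)‖ ^ 2 + (h^2)⁻¹ * (‖v‖ ^ 2 - 2 * inner ℝ (x i - y) v) := by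
      have e1 : y + v - x i = v - (x i - y) := by abel
      rw [e1, norm_smul, norm_smul, norm_sub_rev (y) (x i), mul_pow, mul_pow, norm_sub_sq_real,
        real_inner_comm, Real.norm_of_nonneg (inv_nonneg.2 hh.le), inv_pow]
      ring
    rw [e, real_inner_smul_left]
    ring
  have hs := mul_le_mul_of_nonneg_left (Finset.sum_le_sum fun i (_ : i ∈ Finset.univ) => hterm i) hC
  refine le_trans (le_of_eq ?_) hs
  rw [Finset.sum_sub_distrib, Finset.sum_add_distrib, ← Finset.mul_sum, ← Finset.sum_mul,
    ← Finset.sum_div, ← Finset.mul_sum]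
  ring

lemma grad_eq_of_minorizer {d : ℕ} {f : Euc d → ℝ} {y G : Euc d} {q : ℝ}
    (hf : DifferentiableAt ℝ f y)
    (hmin : ∀ v, f y + inner ℝ G v - q * ‖v‖ ^ 2 ≤ f (y + v)) : gradient f y = G := by
  have hg := hf.hasGradientAt.hasFDerivAt
  set F : Euc d → ℝ := fun z => f z - inner ℝ G (z - y) + q * ‖z - y‖ ^ 2
  have h1 : HasFDerivAt (fun z : Euc d => inner ℝ G (z - y)) (innerSL ℝ G) y := by
    have h3 : HasFDerivAt (fun z : Euc d => innerSL ℝ G z - innerSL ℝ G y) (innerSL ℝ G) y :=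
      (innerSL ℝ G).hasFDerivAt.sub_const _
    have h4 : (fun z : Euc d => inner ℝ G (z - y)) =
        fun z : Euc d => innerSL ℝ G z - innerSL ℝ G y := by
      funext z; simp [inner_sub_right]
    rw [h4]; exact h3
  have h2 : HasFDerivAt (fun z : Euc d => q * ‖z - y‖ ^ 2) (0 : Euc d →L[ℝ] ℝ) y := by
    have := (((hasFDerivAt_id (𝕜 := ℝ) y).sub_const y).norm_sq).const_mul q
    simpa using this
  have hF := (hg.sub h1).add h2
  have hloc : IsLocalMin F y := by
    refine Eventually.of_forall fun z => ?_
    have := hmin (z - y)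
    simp only [F]
    simp only [add_sub_cancel] at this
    simp
    linarith
  have h0 := hloc.hasFDerivAt_eq_zero hF
  refine ext_inner_right ℝ fun v => ?_
  have := congrArg (fun L : Euc d →L[ℝ] ℝ => L v) h0
  have h5 : inner ℝ (gradient f y) v - inner ℝ G v + 0 = 0 := this
  linarith

lemma fcheck_lower {d n : ℕ} (hn : 0 < n) {K : Euc d → ℝ} {Khat Kcheck : ℝ → ℝ}
    (hRS : AssumptionRS d K Khat) (hQM : AssumptionQM Khat Kcheck)
    (x : Fin n → Euc d) {h : ℝ} (hh : 0 < h) {b v : ℝ} (hb : 0 < b) (hv : 0 ≤ v)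
    (hKv : Khat v ≤ b * h ^ d / 2) {y : Euc d} (hy : b ≤ KDE d n K x h y) :
    (∃ i, ‖h⁻¹ • (y - x i)‖ ^ 2 / 2 < v) ∧
      (1 / ((n : ℝ) * h ^ d)) * ((b * h ^ d / 2) / v) ≤ fcheck d n Kcheck x h y := by
  have hn' : (0:ℝ) < n := by exact_mod_cast hn
  have hhd : 0 < h ^ d := by positivity
  obtain ⟨i, hi⟩ : ∃ i, b * h ^ d ≤ K (h⁻¹ • (y - x i)) := by
    by_contra! hc
    have : Nonempty (Fin n) := ⟨⟨0, hn⟩⟩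
    have := Finset.sum_lt_sum_of_nonempty (s := (Finset.univ : Finset (Fin n)))
      Finset.univ_nonempty (fun i _ => hc i)
    unfold KDE at hy
    rw [one_div, ← div_eq_inv_mul, le_div_iff₀ (by positivity)] at hy
    simp at this
    linarith
  rw [hRS.radial] at hi
  have hu0 : 0 ≤ ‖h⁻¹ • (y - x i)‖ ^ 2 / 2 := by positivity
  have hbp : 0 < b * h ^ d := by positivity
  have huv : ‖h⁻¹ • (y - x i)‖ ^ 2 / 2 < v := by
    by_contra! hc
    have := hQM.antitoneOn (a := v) hv hu0 hc
    linarith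
  refine ⟨⟨i, huv⟩, ?_⟩
  have hs := Kcheck_sub hQM _ v hu0 hv
  have hk0 := Kcheck_nonneg hQM _ hu0
  have hlow : (b * h ^ d / 2) / v ≤ Kcheck (‖h⁻¹ • (y - x i)‖ ^ 2 / 2) := by
    rw [div_le_iff₀ (by linarith)]
    nlinarith
  unfold fcheck
  refine mul_le_mul_of_nonneg_left (hlow.trans ?_) (by positivity)
  exact Finset.single_le_sum (f := fun i => Kcheck (‖h⁻¹ • (y - x i)‖ ^ 2 / 2))
    (fun j _ => Kcheck_nonneg hQM _ (by positivity)) (Finset.mem_univ i)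

/-- Abstract trapping argument. -/
lemma summable_of_trap {E : Type*} [NormedAddCommGroup E] (y : ℕ → E) (ybar : E) (φ : ℕ → ℝ)
    (hφ : ∀ t, 0 ≤ φ t) {κ ε : ℝ} (hκ : 0 < κ) (T : ℕ)
    (hT : ‖y T - ybar‖ < ε / 2) (hφT : φ T < κ * (ε / 2))
    (hstep : ∀ t, T ≤ t → ‖ybar - y t‖ < ε → κ * ‖y (t + 1) - y t‖ ≤ φ t - φ (t + 1)) :
    Summable fun t : ℕ => ‖y (t + 1) - y t‖ := by
  have key : ∀ k : ℕ, κ * ∑ s ∈ Finset.range k, ‖y (s + T + 1) - y (s + T)‖ ≤ φ T - φ (k + T) ∧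
      ‖y (k + T) - y T‖ ≤ ∑ s ∈ Finset.range k, ‖y (s + T + 1) - y (s + T)‖ := by
    intro k
    induction k with
    | zero => simp
    | succ k ih =>
      obtain ⟨ih1, ih2⟩ := ih
      have hb : ∑ s ∈ Finset.range k, ‖y (s + T + 1) - y (s + T)‖ < ε / 2 := by
        have := hφ (k + T)
        exact lt_of_mul_lt_mul_left (by linarith : κ * _ < κ * (ε / 2)) hκ.le
      have hd : ‖ybar - y (k + T)‖ < ε := by
        have := norm_sub_le_norm_sub_add_norm_sub (y (k + T)) (y T) ybar
        rw [norm_sub_rev]; linarith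
      have hs := hstep (k + T) (by omega) hd
      have e : k + 1 + T = k + T + 1 := by omega
      rw [Finset.sum_range_succ, mul_add, e]
      refine ⟨by linarith, ?_⟩
      have := norm_sub_le_norm_sub_add_norm_sub (y (k + T + 1)) (y (k + T)) (y T)
      linarith
  rw [← summable_nat_add_iff T]
  refine summable_of_sum_range_le (c := φ T / κ) (fun _ => norm_nonneg _) fun k => ?_
  rw [le_div_iff₀ hκ]
  have := (key k).1
  have := hφ (k + T)
  linarith

/-- The one step Lojasiewicz inequality. -/
lemma loja_step {r r' δ a b c θ : ℝ} (hr : 0 ≤ r) (hr' : 0 ≤ r') (hδ : 0 ≤ δ)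
    (ha : 0 < a) (hb : 0 < b) (hc : 0 < c) (hθ : θ ∈ Set.Ico (0:ℝ) 1)
    (h1 : a * δ ^ 2 ≤ r - r') (h2 : c * r ^ θ ≤ b * δ) :
    (1 - θ) * a * c / b * δ ≤ r ^ (1 - θ) - r' ^ (1 - θ) := by
  have hθ1 : 0 < 1 - θ := by linarith [hθ.2]
  have hle : r' ≤ r := by nlinarith [mul_nonneg ha.le (sq_nonneg δ)]
  rcases hr.eq_or_lt with rfl | hr0
  · have h3 : r' = 0 := le_antisymm hle hr'
    subst h3
    have : δ = 0 := by
      by_contra hne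
      have : 0 < a * δ ^ 2 := by positivity
      linarith
    simp [this]
  · have hp : 0 < r ^ θ := Real.rpow_pos_of_pos hr0 θ
    have hδ0 : 0 < δ := by
      by_contra! hne
      have : δ = 0 := le_antisymm hne hδ
      rw [this] at h2
      have : 0 < c * r ^ θ := by positivity
      linarith
    -- concavity, by Bernoulli
    have hbern : (r' / r) ^ (1 - θ) ≤ 1 + (1 - θ) * (r' / r - 1) := by
      have := rpow_one_add_le_one_add_mul_self (s := r' / r - 1) (p := 1 - θ)
        (by have : 0 ≤ r' / r := by positivity
            linarith) hθ1.le (by linarith [hθ.1])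
      simpa using this
    rw [Real.div_rpow hr' hr] at hbern
    have hq : r ^ (1 - θ) = r / r ^ θ := by rw [Real.rpow_sub hr0, Real.rpow_one]
    have hq0 : 0 < r ^ (1 - θ) := Real.rpow_pos_of_pos hr0 _
    rw [div_le_iff₀ hq0] at hbern
    have e : (1 + (1 - θ) * (r' / r - 1)) * r ^ (1 - θ)
        = r ^ (1 - θ) - (1 - θ) * (r - r') / r ^ θ := by
      rw [hq]; field_simp; ring
    rw [e] at hbern
    have : (1 - θ) * a * c / b * δ ≤ (1 - θ) * (r - r') / r ^ θ := by
      rw [mul_div_assoc, mul_assoc, mul_assoc, mul_div_assoc]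
      refine mul_le_mul_of_nonneg_left ?_ hθ1.le
      rw [le_div_iff₀ hp]
      refine le_trans ?_ h1
      have : a * (c / b * δ) * r ^ θ = a * δ * ((c * r ^ θ) / b) := by ring
      have h3 : (c * r ^ θ) / b ≤ δ := by rw [div_le_iff₀ hb]; linarith
      calc a * (c / b * δ) * r ^ θ = a * δ * ((c * r ^ θ) / b) := by ring
        _ ≤ a * δ * δ := by gcongr
        _ = a * δ ^ 2 := by ring
    linarith

/-- Convergence guarantee for MS: Under Assumptions RS and QM, starting from
`y 0` with `f (y 0) > 0`, if for some `τ`, with `S` the closure of the convex hull of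
`{y t : t ≥ τ}`, (a1) `f` is differentiable on `S` with Lipschitz-continuous gradient on `S`,
and (a2) `f` has the Łojasiewicz property on `S`, then the trajectory has finite length
(`∑ ‖y_{t+1} − y_t‖ < ∞`) and `(y t)` converges to a critical point of `f`. -/
theorem ms_convergence_guarantee
    (d n : ℕ) (hd : 0 < d) (hn : 0 < n)
    (K : Euc d → ℝ) (Khat Kcheck : ℝ → ℝ)
    (hRS : AssumptionRS d K Khat) (hQM : AssumptionQM Khat Kcheck)
    (x : Fin n → Euc d) (h : ℝ) (hh : 0 < h)
    (y : ℕ → Euc d) (hy : MSSeq d n Kcheck x h y)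
    (hy0 : 0 < KDE d n K x h (y 0))
    (τ : ℕ) (S : Set (Euc d))
    (hS : S = closure (convexHull ℝ {z : Euc d | ∃ t : ℕ, τ ≤ t ∧ z = y t}))
    (ha1diff : ∀ z ∈ S, DifferentiableAt ℝ (KDE d n K x h) z)
    (ha1lip : ∃ L : NNReal, LipschitzOnWith L (gradient (KDE d n K x h)) S)
    (ha2 : LojasiewiczOn d (KDE d n K x h) S) :
    (Summable fun t : ℕ => ‖y (t + 1) - y t‖) ∧
    ∃ ybar : Euc d, Filter.Tendsto y Filter.atTop (nhds ybar) ∧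
      gradient (KDE d n K x h) ybar = 0 := by
  set f := KDE d n K x h with hf
  have hn' : (0:ℝ) < n := by exact_mod_cast hn
  have hhd : 0 < h ^ d := by positivity
  have hstepm : ∀ t, msMap d n Kcheck x h (y t) = y (t + 1) - y t := fun t => by
    rw [hy t]; abel
  -- ascent
  have hasc : ∀ t, (h ^ 2)⁻¹ * fcheck d n Kcheck x h (y t) / 2 * ‖y (t + 1) - y t‖ ^ 2
      ≤ f (y (t + 1)) - f (y t) := by
    intro t
    have := minorizer hn hRS hQM x hh (y t) (msMap d n Kcheck x h (y t))
    rw [← hy t, real_inner_smul_left, real_inner_self_eq_norm_sq, hstepm t] at this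
    linarith
  have hmono : Monotone (fun t => f (y t)) := monotone_nat_of_le_succ fun t => by
    have h1 := hasc t
    have h2 := fcheck_nonneg hQM x hh (y t)
    have : 0 ≤ (h ^ 2)⁻¹ * fcheck d n Kcheck x h (y t) / 2 * ‖y (t + 1) - y t‖ ^ 2 := by
      positivity
    linarith
  obtain ⟨v, hv0, hKv⟩ := exists_small hd hRS (f (y 0) * h ^ d / 2) (by positivity)
  have hlow : ∀ t, _ := fun t =>
    fcheck_lower hn hRS hQM x hh hy0 hv0 hKv (hmono (Nat.zero_le t))
  have hvpos : 0 < v := by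
    obtain ⟨i, hi⟩ := (hlow 0).1
    exact lt_of_le_of_lt (by positivity) hi
  set μ := (1 / ((n : ℝ) * h ^ d)) * ((f (y 0) * h ^ d / 2) / v) with hμ
  have hμpos : 0 < μ := by positivity
  set M := (1 / ((n : ℝ) * h ^ d)) * (n * Kcheck 0) with hM
  have hup : ∀ z, fcheck d n Kcheck x h z ≤ M := fun z => fcheck_le hQM x hh z
  have hMpos : 0 < M := hμpos.trans_le ((hlow 0).2.trans (hup _))
  -- boundedness
  have hbdd : Bornology.IsBounded (Set.range y) := by
    have hsub : Set.range y ⊆ ⋃ i : Fin n, Metric.closedBall (x i) (h * (2 * v + 1)) := by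
      rintro _ ⟨t, rfl⟩
      obtain ⟨i, hi⟩ := (hlow t).1
      refine Set.mem_iUnion.2 ⟨i, ?_⟩
      rw [mem_closedBall_iff_norm]
      rw [norm_smul, norm_inv, Real.norm_of_nonneg hh.le] at hi
      have h1 : h⁻¹ * ‖y t - x i‖ ≤ 2 * v + 1 := by
        nlinarith [sq_nonneg (h⁻¹ * ‖y t - x i‖ - 1)]
      rwa [inv_mul_le_iff₀ hh] at h1
    exact (Bornology.isBounded_iUnion.2 fun i => Metric.isBounded_closedBall).subset hsub
  obtain ⟨ybar, -, ψ, hψ, hlim⟩ := tendsto_subseq_of_bounded hbdd (fun t => Set.mem_range_self t)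
  have hSc : IsClosed S := by rw [hS]; exact isClosed_closure
  have hyS : ∀ t, τ ≤ t → y t ∈ S := fun t ht => by
    rw [hS]; exact subset_closure (subset_convexHull ℝ _ ⟨t, ht, rfl⟩)
  have hybS : ybar ∈ S := hSc.mem_of_tendsto hlim (by
    filter_upwards [eventually_ge_atTop τ] with k hk
    exact hyS _ (hk.trans hψ.le_apply))
  have hcont : ContinuousAt f ybar := (ha1diff ybar hybS).continuousAt
  have hflim : Tendsto (fun t => f (y t)) atTop (𝓝 (f ybar)) :=
    (tendsto_iff_tendsto_subseq_of_monotone hmono hψ.tendsto_atTop).2 (hcont.tendsto.comp hlim)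
  have hfle : ∀ t, 0 ≤ f ybar - f (y t) := fun t => sub_nonneg.2 (hmono.ge_of_tendsto hflim t)
  -- gradient
  have hgrad : ∀ t, τ ≤ t → gradient f (y t) =
      ((h ^ 2)⁻¹ * fcheck d n Kcheck x h (y t)) • (y (t + 1) - y t) := by
    intro t ht
    refine grad_eq_of_minorizer (q := (h ^ 2)⁻¹ * fcheck d n Kcheck x h (y t) / 2)
      (ha1diff _ (hyS t ht)) fun w => ?_
    have := minorizer hn hRS hQM x hh (y t) w
    rw [hstepm t] at this
    rw [mul_smul, real_inner_smul_left]
    exact this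
  have hgradn : ∀ t, τ ≤ t → ‖gradient f (y t)‖ ≤ ((h ^ 2)⁻¹ * M) * ‖y (t + 1) - y t‖ := by
    intro t ht
    have h2 := fcheck_nonneg hQM x hh (y t)
    rw [hgrad t ht, norm_smul, Real.norm_of_nonneg (by positivity)]
    have := hup (y t)
    gcongr
  have hsum : Summable fun t : ℕ => ‖y (t + 1) - y t‖ := by
    obtain ⟨ε, hε, c, hc, θ, hθ, hL⟩ := ha2
    have hθ1 : 0 < 1 - θ := by linarith [hθ.2]
    set a := (h ^ 2)⁻¹ * μ / 2 with hadef
    have ha : 0 < a := by positivity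
    set b := (h ^ 2)⁻¹ * M with hbdef
    have hb : 0 < b := by positivity
    have hκ : 0 < (1 - θ) * a * c / b := by positivity
    have hr0 : Tendsto (fun t => (f ybar - f (y t)) ^ (1 - θ)) atTop (𝓝 0) := by
      have h1 : Tendsto (fun t => f ybar - f (y t)) atTop (𝓝 0) := by
        simpa using hflim.const_sub (f ybar)
      have := h1.rpow_const (p := 1 - θ) (Or.inr hθ1.le)
      rwa [Real.zero_rpow hθ1.ne'] at this
    have e1 : ∀ᶠ k in atTop, ‖y (ψ k) - ybar‖ < ε / 2 := by
      have := (Metric.tendsto_nhds.1 hlim) (ε / 2) (by positivity)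
      simpa [dist_eq_norm] using this
    have e2 : ∀ᶠ k in atTop,
        (f ybar - f (y (ψ k))) ^ (1 - θ) < (1 - θ) * a * c / b * (ε / 2) :=
      (hr0.comp hψ.tendsto_atTop).eventually_lt_const (by positivity)
    obtain ⟨k, hk1, hk2, hk3⟩ := (e1.and (e2.and (eventually_ge_atTop τ))).exists
    refine summable_of_trap y ybar (fun t => (f ybar - f (y t)) ^ (1 - θ))
      (fun t => Real.rpow_nonneg (hfle t) _) hκ (ψ k) hk1 hk2 fun t ht hd' => ?_
    have htτ : τ ≤ t := (hk3.trans hψ.le_apply).trans ht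
    refine loja_step (hfle t) (hfle _) (norm_nonneg _) ha hb hc hθ ?_ ?_
    · have h1 := hasc t
      have h2 : a * ‖y (t + 1) - y t‖ ^ 2 ≤
          (h ^ 2)⁻¹ * fcheck d n Kcheck x h (y t) / 2 * ‖y (t + 1) - y t‖ ^ 2 := by
        have := (hlow t).2
        rw [hadef]
        gcongr
      linarith
    · exact (hL ybar hybS (y t) (hyS t htτ) hd' (hfle t)).trans (hgradn t htτ)
  refine ⟨hsum, ybar, ?_, ?_⟩
  · have hcau : CauchySeq y := cauchySeq_of_summable_dist (by
      simpa [dist_eq_norm, norm_sub_rev] using hsum)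
    exact tendsto_nhds_of_cauchySeq_of_subseq hcau hψ.tendsto_atTop hlim
  · obtain ⟨L, hLip⟩ := ha1lip
    have hev : ∀ᶠ k in atTop, y (ψ k) ∈ S := by
      filter_upwards [eventually_ge_atTop τ] with k hk
      exact hyS _ (hk.trans hψ.le_apply)
    have h1 : Tendsto (fun k => gradient f (y (ψ k))) atTop (𝓝 (gradient f ybar)) :=
      (hLip.continuousOn ybar hybS).tendsto.comp (tendsto_nhdsWithin_iff.2 ⟨hlim, hev⟩)
    have h2 : Tendsto (fun t => gradient f (y t)) atTop (𝓝 0) := by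
      refine squeeze_zero_norm' ?_ (by simpa using hsum.tendsto_atTop_zero.const_mul ((h ^ 2)⁻¹ * M))
      filter_upwards [eventually_ge_atTop τ] with t ht
      exact hgradn t ht
    exact tendsto_nhds_unique h1 (h2.comp hψ.tendsto_atTop)
end
end

section
/- (Polynomial-rate convergence when θ > 1/2.) Assume Assumptions RS and QM, and let (y_t)_{t∈ℕ} be the mode estimate sequence obtained by the MS iteration starting from y₁ with f(y₁) > 0. Assume that for some τ ∈ ℕ, with S := closure of the convex hull of {y_t : t ≥ τ}: the KDE f is differentiable on S with Lipschitz-continuous gradient on S, and f has the Łojasiewicz property on S; and that y_t converges to ȳ and f satisfies the Łojasiewicz inequality at ȳ with some exponent θ ∈ (1/2, 1), i.e. there are ε > 0, c > 0 such that ‖∇f(y)‖ ≥ c·(f(ȳ) − f(y))^θ for all y ∈ S with ‖ȳ − y‖ < ε and f(ȳ) − f(y) ≥ 0. Then there exists C > 0 such that ‖ȳ − y_t‖ ≤ C·t^{−(1−θ)/(2θ−1)} and f(ȳ) − f(y_t) ≤ C·t^{−1/(2θ−1)} for all t ≥ 1. -/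
open Set Filter Topology MeasureTheory
open scoped BigOperators RealInnerProductSpace

noncomputable section

lemma qm_subgrad {Khat Kcheck : ℝ → ℝ} (hQM : AssumptionQM Khat Kcheck) {u v : ℝ}
    (hu : 0 ≤ u) (hv : 0 ≤ v) : -(Kcheck u) * (v - u) ≤ Khat v - Khat u := by
  rcases hu.eq_or_lt with rfl | hu
  · rcases hv.eq_or_lt with rfl | hv
    · simp
    · have hle : -(Kcheck 0) ≤ (Khat v - Khat 0) / v := by
        refine le_of_tendsto hQM.rderiv0 ?_
        filter_upwards [Ioo_mem_nhdsGT hv] with w hw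
        have := hQM.convexOn.secant_mono (a := 0) (x := w) (y := v) (by simp)
          (by simpa using hw.1.le) (by simpa using hv.le) hw.1.ne' hv.ne' hw.2.le
        simpa using this
      rw [le_div_iff₀ hv] at hle
      simpa using hle
  · exact hQM.subdiff u hu v hv

lemma qm_nonneg {Khat Kcheck : ℝ → ℝ} (hQM : AssumptionQM Khat Kcheck) {u : ℝ}
    (hu : 0 ≤ u) : 0 ≤ Kcheck u := by
  have h1 := qm_subgrad hQM hu (v := u + 1) (by linarith)
  have h2 := hQM.antitoneOn (a := u) (b := u + 1) hu (by simp; linarith) (by linarith)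
  linarith

lemma qm_le {Khat Kcheck : ℝ → ℝ} (hQM : AssumptionQM Khat Kcheck) {u : ℝ}
    (hu : 0 ≤ u) : Kcheck u ≤ Kcheck 0 := by
  rcases hu.eq_or_lt with rfl | hu
  · exact le_rfl
  have h1 := qm_subgrad hQM hu.le (v := 0) le_rfl
  have h2 := qm_subgrad hQM (u := 0) (v := u) le_rfl hu.le
  have : 0 ≤ (Kcheck 0 - Kcheck u) * u := by linarith
  have := nonneg_of_mul_nonneg_left this hu
  linarith

lemma profile_small {d : ℕ} (hd : 0 < d) {K : Euc d → ℝ} {Khat : ℝ → ℝ}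
    (hRS : AssumptionRS d K Khat) {a : ℝ} (ha : 0 < a) : ∃ V : ℝ, 0 ≤ V ∧ Khat V < a := by
  by_contra! hcon
  have hint : Integrable K := by
    by_contra hni
    have := hRS.normalized
    rw [integral_undef hni] at this
    exact zero_ne_one this
  have hle : ∀ z, a ≤ K z := fun z => by
    rw [hRS.radial]; exact hcon _ (by positivity)
  have hconst : Integrable (fun _ : Euc d => a) := by
    refine hint.mono' aestronglyMeasurable_const ?_
    filter_upwards with z
    rw [Real.norm_of_nonneg ha.le]; exact hle z
  rw [integrable_const_iff] at hconst
  rcases hconst with h0 | hfin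
  · exact ha.ne' h0
  · have : Nonempty (Fin d) := ⟨⟨0, hd⟩⟩
    have h1 := hfin.measure_univ_lt_top
    have h2 : (volume : Measure (Euc d)) Set.univ = ⊤ := measure_univ_of_isAddLeftInvariant _
    rw [h2] at h1
    exact lt_irrefl _ h1

lemma fcheck_bounds {d n : ℕ} (hd : 0 < d) (hn : 0 < n)
    {K : Euc d → ℝ} {Khat Kcheck : ℝ → ℝ}
    (hRS : AssumptionRS d K Khat) (hQM : AssumptionQM Khat Kcheck)
    (x : Fin n → Euc d) {h : ℝ} (hh : 0 < h) {p : ℝ} (hp : 0 < p) :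
    ∃ a b : ℝ, 0 < a ∧ 0 < b ∧ ∀ y, fcheck d n Kcheck x h y ≤ b ∧
      (p ≤ KDE d n K x h y → a ≤ fcheck d n Kcheck x h y) := by
  have hn' : (0:ℝ) < n := by exact_mod_cast hn
  have hc : 0 < 1 / ((n : ℝ) * h ^ d) := by positivity
  set c := 1 / ((n : ℝ) * h ^ d) with hcdef
  set q := p / (c * n) with hq
  have hqpos : 0 < q := by positivity
  obtain ⟨V, hV0, hV⟩ := profile_small hd hRS (half_pos hqpos)
  refine ⟨c * (q / 2 / (V + 1)), c * (n * Kcheck 0) + 1, by positivity, ?_, ?_⟩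
  · have := qm_nonneg hQM (u := 0) le_rfl
    positivity
  intro y
  constructor
  · have : ∑ i : Fin n, Kcheck (‖h⁻¹ • (y - x i)‖ ^ 2 / 2) ≤ n * Kcheck 0 := by
      calc _ ≤ ∑ i : Fin n, Kcheck 0 :=
            Finset.sum_le_sum fun i _ => qm_le hQM (by positivity)
        _ = _ := by simp
    unfold fcheck
    have := mul_le_mul_of_nonneg_left this hc.le
    linarith
  · intro hpy
    have hex : ∃ i : Fin n, q ≤ K (h⁻¹ • (y - x i)) := by
      by_contra! hcon
      have hlt : ∑ i : Fin n, K (h⁻¹ • (y - x i)) < ∑ i : Fin n, q :=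
        Finset.sum_lt_sum_of_nonempty ⟨⟨0, hn⟩, Finset.mem_univ _⟩ fun i _ => hcon i
      have h2 := mul_lt_mul_of_pos_left hlt hc
      have h3 : c * ∑ i : Fin n, q = p := by
        simp only [Finset.sum_const, Finset.card_univ, Fintype.card_fin, nsmul_eq_mul, hq]
        field_simp
      unfold KDE at hpy
      linarith
    obtain ⟨i, hi⟩ := hex
    rw [hRS.radial] at hi
    set u := ‖h⁻¹ • (y - x i)‖ ^ 2 / 2 with hu
    have hu0 : 0 ≤ u := by positivity
    have huV : u < V := by
      by_contra! hVu
      have := hQM.antitoneOn (a := V) (b := u) hV0 hu0 hVu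
      linarith
    have hs := qm_subgrad hQM hu0 hV0
    have hk0 := qm_nonneg hQM hu0
    have hKu : q / 2 / (V + 1) ≤ Kcheck u := by
      rw [div_le_iff₀ (by linarith)]
      nlinarith
    refine mul_le_mul_of_nonneg_left (hKu.trans ?_) hc.le
    exact Finset.single_le_sum (f := fun i => Kcheck (‖h⁻¹ • (y - x i)‖ ^ 2 / 2))
      (fun j _ => qm_nonneg hQM (by positivity)) (Finset.mem_univ i)

lemma kde_minor {d n : ℕ} (hn : 0 < n)
    {K : Euc d → ℝ} {Khat Kcheck : ℝ → ℝ}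
    (hRS : AssumptionRS d K Khat) (hQM : AssumptionQM Khat Kcheck)
    (x : Fin n → Euc d) {h : ℝ} (hh : 0 < h) (y z : Euc d) :
    (fcheck d n Kcheck x h y / h ^ 2) *
      (⟪msMap d n Kcheck x h y, z - y⟫ - ‖z - y‖ ^ 2 / 2)
      ≤ KDE d n K x h z - KDE d n K x h y := by
  have hn' : (0:ℝ) < n := by exact_mod_cast hn
  have hc : 0 < 1 / ((n : ℝ) * h ^ d) := by positivity
  have key := congrArg (fun w => ⟪w, z - y⟫) (fcheck_smul_msMap hn hQM x hh y)
  simp only [inner_smul_left, sum_inner, RCLike.conj_to_real] at key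
  have hpt : ∀ i : Fin n, Kcheck (‖h⁻¹ • (y - x i)‖ ^ 2 / 2) / h ^ 2 *
      (⟪x i - y, z - y⟫ - ‖z - y‖ ^ 2 / 2) ≤
      K (h⁻¹ • (z - x i)) - K (h⁻¹ • (y - x i)) := by
    intro i
    rw [hRS.radial, hRS.radial]
    refine le_trans (le_of_eq ?_) (qm_subgrad hQM (u := ‖h⁻¹ • (y - x i)‖ ^ 2 / 2)
      (v := ‖h⁻¹ • (z - x i)‖ ^ 2 / 2) (by positivity) (by positivity))
    have e1 : ‖z - x i‖ ^ 2 = ‖z - y‖ ^ 2 - 2 * ⟪x i - y, z - y⟫ + ‖y - x i‖ ^ 2 := by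
      have : z - x i = (z - y) - (x i - y) := by abel
      rw [this, norm_sub_sq_real, real_inner_comm, norm_sub_rev y (x i)]
    have e2 : ∀ w : Euc d, ‖h⁻¹ • w‖ ^ 2 = ‖w‖ ^ 2 / h ^ 2 := fun w => by
      rw [norm_smul, mul_pow, norm_inv, Real.norm_of_nonneg hh.le, inv_pow]; field_simp
    rw [show (‖h⁻¹ • (z - x i)‖ ^ 2 / 2 - ‖h⁻¹ • (y - x i)‖ ^ 2 / 2) =
      -(⟪x i - y, z - y⟫ - ‖z - y‖ ^ 2 / 2) / h ^ 2 by
        rw [e2, e2, e1]; field_simp; ring]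
    ring
  have hsum := mul_le_mul_of_nonneg_left (Finset.sum_le_sum fun i (_ : i ∈ Finset.univ) => hpt i)
    hc.le
  rw [Finset.sum_sub_distrib, mul_sub] at hsum
  refine le_trans (le_of_eq ?_) hsum
  have e3 : (fcheck d n Kcheck x h y / h ^ 2) *
      (⟪msMap d n Kcheck x h y, z - y⟫ - ‖z - y‖ ^ 2 / 2) =
      (fcheck d n Kcheck x h y * ⟪msMap d n Kcheck x h y, z - y⟫) / h ^ 2
      - fcheck d n Kcheck x h y * (‖z - y‖ ^ 2 / 2) / h ^ 2 := by ring
  rw [e3, key]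
  unfold fcheck
  have e4 : ∀ c A B H : ℝ, c * A / H - c * B / H = c * ((A - B) / H) := fun _ _ _ _ => by ring
  rw [mul_assoc, Finset.sum_mul, e4, ← Finset.sum_sub_distrib, Finset.sum_div]
  congr 1
  refine Finset.sum_congr rfl fun i _ => ?_
  ring

lemma gradient_of_minor {E : Type*} [NormedAddCommGroup E] [InnerProductSpace ℝ E]
    [CompleteSpace E] {F : E → ℝ} {y m : E} {a : ℝ} (hdiff : DifferentiableAt ℝ F y)
    (hle : ∀ z, a * (⟪m, z - y⟫ - ‖z - y‖ ^ 2 / 2) ≤ F z - F y) :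
    gradient F y = a • m := by
  have h1 : HasFDerivAt F (fderiv ℝ F y) y := hdiff.hasFDerivAt
  have h2 : HasFDerivAt (fun z : E => a * (⟪m, z - y⟫ - ‖z - y‖ ^ 2 / 2))
      (a • (innerSL ℝ m)) y := by
    have hs : HasFDerivAt (fun z : E => z - y) (ContinuousLinearMap.id ℝ E) y :=
      (hasFDerivAt_id y).sub_const y
    have hi : HasFDerivAt (fun z : E => ⟪m, z - y⟫) (innerSL ℝ m) y :=
      (innerSL ℝ m).hasFDerivAt.comp y hs
    have hq : HasFDerivAt (fun z : E => ‖z - y‖ ^ 2 / 2) (0 : E →L[ℝ] ℝ) y := by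
      have := (hs.norm_sq).mul_const (2:ℝ)⁻¹
      simpa [div_eq_mul_inv] using this
    have := (hi.sub hq).const_mul a
    rw [sub_zero] at this
    exact this
  have hmin : IsLocalMin (fun z => F z - a * (⟪m, z - y⟫ - ‖z - y‖ ^ 2 / 2)) y := by
    refine Filter.Eventually.of_forall fun z => ?_
    have := hle z
    simp only [sub_self, inner_zero_right, norm_zero]
    norm_num
    linarith
  have h0 := hmin.hasFDerivAt_eq_zero (h1.sub h2)
  have h3 : fderiv ℝ F y = a • innerSL ℝ m := sub_eq_zero.mp h0
  unfold gradient
  rw [h3, LinearIsometryEquiv.symm_apply_eq]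
  ext v
  simp

lemma kde_gradient {d n : ℕ} (hn : 0 < n)
    {K : Euc d → ℝ} {Khat Kcheck : ℝ → ℝ}
    (hRS : AssumptionRS d K Khat) (hQM : AssumptionQM Khat Kcheck)
    (x : Fin n → Euc d) {h : ℝ} (hh : 0 < h) (y : Euc d)
    (hdiff : DifferentiableAt ℝ (KDE d n K x h) y) :
    gradient (KDE d n K x h) y =
      (fcheck d n Kcheck x h y / h ^ 2) • msMap d n Kcheck x h y :=
  gradient_of_minor hdiff (kde_minor hn hRS hQM x hh y)

lemma bernoulli_aux {u v q : ℝ} (hu : 0 < u) (hv : 0 ≤ v) (hq0 : 0 ≤ q) (hq1 : q ≤ 1) :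
    v ^ q ≤ u ^ q * (1 - q * ((u - v) / u)) := by
  have hb := rpow_one_add_le_one_add_mul_self (s := v / u - 1) (p := q)
    (by have := div_nonneg hv hu.le; linarith) hq0 hq1
  rw [add_sub_cancel, Real.div_rpow hv hu.le, div_le_iff₀ (Real.rpow_pos_of_pos hu q)] at hb
  refine hb.trans (le_of_eq ?_)
  field_simp
  ring

lemma rate_aux {r : ℕ → ℝ} {κ q : ℝ} (hr : ∀ k, 0 ≤ r k) (hκ : 0 < κ) (hq0 : 0 < q)
    (hq1 : q < 1) (hstep : ∀ k, κ * (r k) ^ (q + 1) ≤ r k - r (k + 1)) (k : ℕ) :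
    q * κ * k * (r k) ^ q ≤ 1 := by
  induction k with
  | zero => simp
  | succ k ih =>
    rcases (hr k).eq_or_lt with h0 | hpos
    · have h1 := hstep k
      rw [← h0, Real.zero_rpow (by linarith)] at h1
      have h2 : r (k + 1) = 0 := le_antisymm (by linarith) (hr _)
      rw [h2, Real.zero_rpow hq0.ne']; simp
    · have hb := bernoulli_aux hpos (hr (k + 1)) hq0.le hq1.le
      have hs := hstep k
      rw [Real.rpow_add hpos, Real.rpow_one] at hs
      set δ := (r k - r (k + 1)) / r k with hδ
      have hδ1 : δ ≤ 1 := by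
        rw [hδ, div_le_one hpos]; linarith [hr (k + 1)]
      have hδ2 : κ * r k ^ q ≤ δ := by
        rw [hδ, le_div_iff₀ hpos]; linarith
      have hR : 0 < r k ^ q := Real.rpow_pos_of_pos hpos q
      set R := r k ^ q
      set w := q * κ * R with hw
      have hwδ : w ≤ q * δ := by
        rw [hw, mul_assoc]; exact mul_le_mul_of_nonneg_left hδ2 hq0.le
      have hw0 : 0 < w := by positivity
      have hw1 : w ≤ 1 := by nlinarith
      have hb' : r (k + 1) ^ q ≤ R * (1 - w) :=
        hb.trans (mul_le_mul_of_nonneg_left (by linarith) hR.le)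
      have hkw : (k:ℝ) * w ≤ 1 := by rw [hw]; linarith
      push_cast
      calc q * κ * (k + 1) * r (k + 1) ^ q ≤ q * κ * (k + 1) * (R * (1 - w)) :=
            mul_le_mul_of_nonneg_left hb' (by positivity)
        _ = (k * w + w) * (1 - w) := by rw [hw]; ring
        _ ≤ (1 + w) * (1 - w) := mul_le_mul_of_nonneg_right (by linarith) (by linarith)
        _ ≤ 1 := by nlinarith

lemma eventually_to_all {g : ℕ → ℝ} {C e : ℝ} (N : ℕ)
    (hg : ∀ t, N ≤ t → g t ≤ C * (t:ℝ) ^ (-e)) :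
    ∃ Ca : ℝ, 0 < Ca ∧ ∀ Cb ≥ Ca, ∀ t : ℕ, 1 ≤ t → g t ≤ Cb * (t:ℝ) ^ (-e) := by
  have hs : 0 ≤ ∑ s ∈ Finset.range N, |g s| * (s:ℝ) ^ e :=
    Finset.sum_nonneg fun s _ => by positivity
  refine ⟨|C| + 1 + ∑ s ∈ Finset.range N, |g s| * (s:ℝ) ^ e, by positivity, ?_⟩
  intro Cb hC t ht
  have htpos : (0:ℝ) < t := by exact_mod_cast ht
  have hp : 0 < (t:ℝ) ^ (-e) := Real.rpow_pos_of_pos htpos _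
  by_cases hN : N ≤ t
  · refine (hg t hN).trans (mul_le_mul_of_nonneg_right ?_ hp.le)
    linarith [le_abs_self C]
  · have hm : |g t| * (t:ℝ) ^ e ≤ ∑ s ∈ Finset.range N, |g s| * (s:ℝ) ^ e :=
      Finset.single_le_sum (f := fun s : ℕ => |g s| * (s:ℝ) ^ e)
        (fun s _ => by positivity) (Finset.mem_range.mpr (not_le.mp hN))
    have : |g t| = |g t| * (t:ℝ) ^ e * (t:ℝ) ^ (-e) := by
      rw [mul_assoc, ← Real.rpow_add htpos]; simp
    calc g t ≤ |g t| := le_abs_self _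
      _ = |g t| * (t:ℝ) ^ e * (t:ℝ) ^ (-e) := this
      _ ≤ Cb * (t:ℝ) ^ (-e) :=
        mul_le_mul_of_nonneg_right (by linarith [abs_nonneg C]) hp.le

lemma dist_aux {d : ℕ} {y : ℕ → Euc d} {ybar : Euc d} {r : ℕ → ℝ} {D q : ℝ}
    (hr : ∀ k, 0 ≤ r k) (hD : 0 ≤ D)
    (hconv : Filter.Tendsto y Filter.atTop (nhds ybar))
    (hstep : ∀ k, ‖y (k + 1) - y k‖ ≤ D * (r k ^ q - r (k + 1) ^ q)) (k : ℕ) :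
    ‖ybar - y k‖ ≤ D * r k ^ q := by
  have hj : ∀ j, ‖y (k + j) - y k‖ ≤ D * (r k ^ q - r (k + j) ^ q) := by
    intro j
    induction j with
    | zero => simp
    | succ j ih =>
      have h1 := hstep (k + j)
      have h2 := norm_sub_le_norm_sub_add_norm_sub (y (k + (j + 1))) (y (k + j)) (y k)
      rw [← add_assoc] at *
      linarith
  have hlim : Filter.Tendsto (fun j => ‖y (k + j) - y k‖) Filter.atTop (nhds ‖ybar - y k‖) := by
    have : Filter.Tendsto (fun j => y (k + j)) Filter.atTop (nhds ybar) := by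
      have := (Filter.tendsto_add_atTop_iff_nat k).mpr hconv
      simpa [add_comm] using this
    exact (this.sub_const _).norm
  refine le_of_tendsto hlim (Filter.Eventually.of_forall fun j => (hj j).trans ?_)
  have := Real.rpow_nonneg (hr (k + j)) q
  exact mul_le_mul_of_nonneg_left (by linarith) hD

/-- Polynomial-rate convergence when `θ > 1/2`: under the assumptions of the
convergence theorem, if moreover `y t → ȳ` and `f` satisfies the Łojasiewicz inequality at `ȳ`
with some exponent `θ ∈ (1/2, 1)`, then there is `C > 0` with
`‖ȳ − y t‖ ≤ C t^{−(1−θ)/(2θ−1)}` and `f(ȳ) − f(y t) ≤ C t^{−1/(2θ−1)}` for all `t ≥ 1`. -/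
theorem ms_polynomial_rate_convergence
    (d n : ℕ) (hd : 0 < d) (hn : 0 < n)
    (K : Euc d → ℝ) (Khat Kcheck : ℝ → ℝ)
    (hRS : AssumptionRS d K Khat) (hQM : AssumptionQM Khat Kcheck)
    (x : Fin n → Euc d) (h : ℝ) (hh : 0 < h)
    (y : ℕ → Euc d) (hy : MSSeq d n Kcheck x h y)
    (hy0 : 0 < KDE d n K x h (y 0))
    (τ : ℕ) (S : Set (Euc d))
    (hS : S = closure (convexHull ℝ {z : Euc d | ∃ t : ℕ, τ ≤ t ∧ z = y t}))
    (ha1diff : ∀ z ∈ S, DifferentiableAt ℝ (KDE d n K x h) z)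
    (ha1lip : ∃ L : NNReal, LipschitzOnWith L (gradient (KDE d n K x h)) S)
    (ha2 : LojasiewiczOn d (KDE d n K x h) S)
    (ybar : Euc d) (hconv : Filter.Tendsto y Filter.atTop (nhds ybar))
    (θ : ℝ) (hθ : θ ∈ Set.Ioo (1/2 : ℝ) 1)
    (hloja : LojasiewiczAtWith d (KDE d n K x h) S ybar θ) :
    ∃ C : ℝ, 0 < C ∧ ∀ t : ℕ, 1 ≤ t →
      ‖ybar - y t‖ ≤ C * (t : ℝ) ^ (-((1 - θ) / (2 * θ - 1))) ∧
      KDE d n K x h ybar - KDE d n K x h (y t) ≤ C * (t : ℝ) ^ (-(1 / (2 * θ - 1))) := by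
  have hθ1 : 1 / 2 < θ := hθ.1
  have hθ2 : θ < 1 := hθ.2
  set F := KDE d n K x h with hF
  obtain ⟨a, b, ha, hb, hab⟩ := fcheck_bounds hd hn hRS hQM x hh hy0
  have hfnn : ∀ z, 0 ≤ fcheck d n Kcheck x h z := fun z => by
    unfold fcheck
    have : 0 ≤ ∑ i : Fin n, Kcheck (‖h⁻¹ • (z - x i)‖ ^ 2 / 2) :=
      Finset.sum_nonneg fun i _ => qm_nonneg hQM (by positivity)
    positivity
  have hm : ∀ t, msMap d n Kcheck x h (y t) = y (t + 1) - y t := fun t => by rw [hy t]; abel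
  have hasc : ∀ t, fcheck d n Kcheck x h (y t) / (2 * h ^ 2) * ‖y (t + 1) - y t‖ ^ 2 ≤
      F (y (t + 1)) - F (y t) := by
    intro t
    have := kde_minor hn hRS hQM x hh (y t) (y (t + 1))
    rw [hm, real_inner_self_eq_norm_sq] at this
    refine le_trans (le_of_eq ?_) this
    field_simp
    ring
  have hmono : Monotone fun t => F (y t) := monotone_nat_of_le_succ fun t => by
    have h1 := hasc t
    have h2 := hfnn (y t)
    have : 0 ≤ fcheck d n Kcheck x h (y t) / (2 * h ^ 2) * ‖y (t + 1) - y t‖ ^ 2 := by positivity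
    linarith
  have hlow : ∀ t, a ≤ fcheck d n Kcheck x h (y t) := fun t =>
    (hab (y t)).2 (hmono (Nat.zero_le t))
  have hyS : ∀ t, τ ≤ t → y t ∈ S := fun t ht => by
    rw [hS]; exact subset_closure (subset_convexHull ℝ _ ⟨t, ht, rfl⟩)
  have hcl : IsClosed S := by rw [hS]; exact isClosed_closure
  have hbS : ybar ∈ S := hcl.mem_of_tendsto hconv
    (Filter.eventually_atTop.mpr ⟨τ, hyS⟩)
  have hFconv : Filter.Tendsto (fun t => F (y t)) Filter.atTop (nhds (F ybar)) :=
    (ha1diff ybar hbS).continuousAt.tendsto.comp hconv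
  have hrnn : ∀ t, 0 ≤ F ybar - F (y t) := fun t => by
    have := hmono.ge_of_tendsto hFconv t
    simpa using this
  obtain ⟨ε, hε, c, hc, hL⟩ := hloja
  obtain ⟨T0, hT0⟩ := Metric.tendsto_atTop.mp hconv ε hε
  set T := max T0 τ with hT
  set r : ℕ → ℝ := fun k => F ybar - F (y (k + T)) with hr
  have hr0 : ∀ k, 0 ≤ r k := fun k => hrnn _
  set A := a / (2 * h ^ 2) with hA
  have hApos : 0 < A := by positivity
  set B := c * h ^ 2 / b with hB
  have hBpos : 0 < B := by positivity
  have hstep1 : ∀ k, A * ‖y (k + 1 + T) - y (k + T)‖ ^ 2 ≤ r k - r (k + 1) := by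
    intro k
    have h1 := hasc (k + T)
    have h2 : k + 1 + T = k + T + 1 := by ring
    simp only [hr, h2]
    have h3 : A ≤ fcheck d n Kcheck x h (y (k + T)) / (2 * h ^ 2) :=
      div_le_div_of_nonneg_right (hlow _) (by positivity)
    have := mul_le_mul_of_nonneg_right h3 (sq_nonneg ‖y (k + T + 1) - y (k + T)‖)
    linarith
  have hstep2 : ∀ k, B * r k ^ θ ≤ ‖y (k + 1 + T) - y (k + T)‖ := by
    intro k
    have h2 : k + 1 + T = k + T + 1 := by ring
    have hmem : y (k + T) ∈ S := hyS _ ((le_max_right _ _).trans (Nat.le_add_left _ _))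
    have hd1 := hT0 (k + T) ((le_max_left _ _).trans (Nat.le_add_left _ _))
    have h3 := hL (y (k + T)) hmem (by rwa [dist_comm, dist_eq_norm] at hd1) (hrnn _)
    rw [kde_gradient hn hRS hQM x hh _ (ha1diff _ hmem), norm_smul, hm,
      Real.norm_of_nonneg (div_nonneg (hfnn _) (by positivity))] at h3
    have h4 : fcheck d n Kcheck x h (y (k + T)) / h ^ 2 ≤ b / h ^ 2 :=
      div_le_div_of_nonneg_right (hab _).1 (by positivity)
    have h5 := mul_le_mul_of_nonneg_right h4 (norm_nonneg (y (k + T + 1) - y (k + T)))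
    have h6 : c * r k ^ θ ≤ b / h ^ 2 * ‖y (k + T + 1) - y (k + T)‖ := le_trans h3 h5
    rw [h2]
    have h7 := mul_le_mul_of_nonneg_left h6 (show 0 ≤ h ^ 2 / b by positivity)
    refine le_trans (le_of_eq ?_) (h7.trans (le_of_eq ?_))
    · rw [hB]; ring
    · field_simp
  set q := 2 * θ - 1 with hq
  have hq0 : 0 < q := by linarith
  have hq1 : q < 1 := by linarith
  have hκ : 0 < A * B ^ 2 := by positivity
  have hrate := rate_aux (r := r) (κ := A * B ^ 2) hr0 hκ hq0 hq1 (by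
    intro k
    have e : r k ^ (q + 1) = (r k ^ θ) ^ 2 := by
      rw [← Real.rpow_natCast, ← Real.rpow_mul (hr0 k)]
      congr 1; rw [hq]; push_cast; ring
    have h1 : (B * r k ^ θ) ^ 2 ≤ ‖y (k + 1 + T) - y (k + T)‖ ^ 2 :=
      pow_le_pow_left₀ (mul_nonneg hBpos.le (Real.rpow_nonneg (hr0 k) _)) (hstep2 k) 2
    have h2 := mul_le_mul_of_nonneg_left h1 hApos.le
    rw [e]
    have := hstep1 k
    nlinarith)
  set κ := A * B ^ 2 with hκdef
  set D := 1 / (A * B * (1 - θ)) with hD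
  have h1θ : 0 < 1 - θ := by linarith
  have hDpos : 0 < D := by positivity
  have hstep3 : ∀ k, ‖y (k + 1 + T) - y (k + T)‖ ≤ D * (r k ^ (1 - θ) - r (k + 1) ^ (1 - θ)) := by
    intro k
    have hs1 := hstep1 k
    have hs2 := hstep2 k
    set M := ‖y (k + 1 + T) - y (k + T)‖ with hM
    have hM0 : 0 ≤ M := norm_nonneg _
    rcases (hr0 k).eq_or_lt with h0 | hpos
    · have h3 := hr0 (k + 1)
      have h4 : A * M ^ 2 ≤ 0 := by linarith
      have h5 : 0 ≤ A * M ^ 2 := by positivity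
      have h6 : r (k + 1) = 0 := by linarith
      have h7 : M = 0 := by
        have : A * M ^ 2 = 0 := le_antisymm h4 h5
        simpa [hApos.ne'] using this
      rw [h7, ← h0, h6]; simp
    · have hb1 := bernoulli_aux hpos (hr0 (k + 1)) h1θ.le (by linarith : 1 - θ ≤ 1)
      have hR : 0 < r k ^ θ := Real.rpow_pos_of_pos hpos _
      have e : r k ^ (1 - θ) = r k / r k ^ θ := by rw [Real.rpow_sub hpos, Real.rpow_one]
      have hb2 : (1 - θ) * ((r k - r (k + 1)) / r k ^ θ) ≤ r k ^ (1 - θ) - r (k + 1) ^ (1 - θ) := by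
        have : r k ^ (1 - θ) * (1 - (1 - θ) * ((r k - r (k + 1)) / r k)) =
            r k ^ (1 - θ) - (1 - θ) * ((r k - r (k + 1)) / r k ^ θ) := by
          rw [mul_sub, mul_one]
          nth_rewrite 2 [e]
          congr 1
          field_simp
        linarith
      have hb3 : A * B * M ≤ (r k - r (k + 1)) / r k ^ θ := by
        rw [le_div_iff₀ hR]
        calc A * B * M * r k ^ θ = A * M * (B * r k ^ θ) := by ring
          _ ≤ A * M * M := mul_le_mul_of_nonneg_left hs2 (by positivity)
          _ = A * M ^ 2 := by ring
          _ ≤ _ := hs1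
      have hb4 := mul_le_mul_of_nonneg_left hb3 h1θ.le
      have hb5 := mul_le_mul_of_nonneg_left (hb4.trans hb2) hDpos.le
      refine le_trans (le_of_eq ?_) hb5
      rw [hD]; field_simp
  have hdist := dist_aux (y := fun k => y (k + T)) (r := r) hr0 hDpos.le
    ((Filter.tendsto_add_atTop_iff_nat T).mpr hconv) hstep3
  set Q := 2 / (q * κ) with hQ
  have hQpos : 0 < Q := by positivity
  -- the function value bound for large times
  have hval : ∀ t, 2 * T + 1 ≤ t → F ybar - F (y t) ≤ Q ^ (1 / q) * (t:ℝ) ^ (-(1 / q)) := by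
    intro t ht
    have htpos : (0:ℝ) < t := by exact_mod_cast (by omega : 0 < t)
    obtain ⟨k, rfl⟩ : ∃ k, t = k + T := ⟨t - T, by omega⟩
    have hk : ((k + T : ℕ) : ℝ) ≤ 2 * k := by exact_mod_cast (by omega : k + T ≤ 2 * k)
    have h1 := hrate k
    have hRn : 0 ≤ r k ^ q := Real.rpow_nonneg (hr0 k) _
    have h2 : r k ^ q ≤ Q / ((k + T : ℕ) : ℝ) := by
      rw [le_div_iff₀ htpos, hQ, le_div_iff₀ (by positivity)]
      have := mul_le_mul_of_nonneg_left hk (show 0 ≤ r k ^ q * (q * κ) by positivity)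
      nlinarith
    have h3 := Real.rpow_le_rpow hRn h2 (show 0 ≤ 1 / q by positivity)
    rw [← Real.rpow_mul (hr0 k), mul_one_div_cancel hq0.ne', Real.rpow_one,
      Real.div_rpow hQpos.le htpos.le] at h3
    rw [Real.rpow_neg htpos.le, ← div_eq_mul_inv]
    exact h3
  have hdis : ∀ t, 2 * T + 1 ≤ t → ‖ybar - y t‖ ≤
      D * (Q ^ (1 / q)) ^ (1 - θ) * (t:ℝ) ^ (-((1 - θ) / q)) := by
    intro t ht
    have htpos : (0:ℝ) < t := by exact_mod_cast (by omega : 0 < t)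
    have h1 := hval t ht
    have h2 := Real.rpow_le_rpow (hrnn t) h1 h1θ.le
    rw [Real.mul_rpow (by positivity) (by positivity), ← Real.rpow_mul htpos.le,
      show -(1 / q) * (1 - θ) = -((1 - θ) / q) by ring] at h2
    have h3 := hdist (t - T)
    have h4 : t - T + T = t := by omega
    simp only [hr, h4] at h3
    have h5 := mul_le_mul_of_nonneg_left h2 hDpos.le
    rw [mul_assoc]
    exact h3.trans h5
  obtain ⟨C1, hC1, hg1⟩ := eventually_to_all _ hdis
  obtain ⟨C2, hC2, hg2⟩ := eventually_to_all _ hval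
  exact ⟨max C1 C2, lt_max_of_lt_left hC1, fun t ht =>
    ⟨hg1 _ (le_max_left _ _) t ht, hg2 _ (le_max_right _ _) t ht⟩⟩
end
end
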